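/- Let f : C([n],k) → R, let f₀ and f₁ denote its restrictions by fixing the last coordinate to 0 and 1 respectively, and let S ∈ H_{n−1, min{k,n−k}} with |S| < min{k, n−k}. Then f̂(S ∪ {n}) = (1/√(n − 2|S|)) · (−√(k − |S|) · f̂₀(S) + √(n − k − |S|) · f̂₁(S)). -/

import Mathlib

/-! The whole argument takes place on functions on the cube `{0,1}^n`, where a function on a slice
is extended by zero.  There the up operators of all slices become a single operator `cubeUp`, with
adjoint `cubeDown`, and splitting off the last coordinate writes a function on `{0,1}^(n+1)` as a
pair `(g₀, g₁)`, on which `U (g₀, g₁) = (U g₀, U g₁ + g₀)` and `D (g₀, g₁) = (D g₀ + g₁, D g₁)`.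
These two rules give the commutation relation `D U - U D = n - 2|x|` by induction on `n`
(`cubeDown_cubeUp`).

Write `X` for the extension of `χ_{n,S}`, with `s = |S|`.  The recursive definition of `χ` together
with the commutation relation gives `D X = 0` (`cubeDown_cubeChi`), hence
`D U^(m+1) X = (m+1)(n-2s-m) U^m X`, and so, by adjointness,
`‖U^(m+1) X‖² = (m+1)(n-2s-m) ‖U^m X‖²` (`sum_cubeUp_sq`).

For `S ∪ {n+1}` the extension of `χ_{n+1,S∪{n+1}}` is the pair `(-U X / (n-2s), X)`, so that
`U^m` of it is `(-U^(m+1) X / (n-2s), (1 - m/(n-2s)) U^m X)`.  With `m = k-s-1` the components are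
multiples of the basis vectors attached to `S` on the slices of the two restrictions.  The claim
follows on dividing by the norm, which the norm relation expresses through `‖U^m X‖`. -/


open scoped Classical

/-- The slice `C([n],k)`: vectors in `{0,1}^n` with exactly `k` ones. -/
abbrev Slice (n k : ℕ) :=
  {x : Fin n → Bool // (Finset.univ.filter fun i => x i = true).card = k}

/-- The up operator `P↑_{n,k}`. -/
noncomputable def upOp (n k : ℕ) : Matrix (Slice n (k + 1)) (Slice n k) ℝ :=
  Matrix.of fun x y => if ∀ i, y.1 i = true → x.1 i = true then (1 : ℝ) else 0

/-- The down operator `P↓_{n,k}` (the transpose of `P↑_{n,k-1}`); it is the zero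
matrix for `k = 0`. -/
noncomputable def downOp (n k : ℕ) : Matrix (Slice n (k - 1)) (Slice n k) ℝ :=
  Matrix.of fun x y => if 0 < k ∧ ∀ i, x.1 i = true → y.1 i = true then (1 : ℝ) else 0

noncomputable def upPathAux (n i : ℕ) : (d : ℕ) → Matrix (Slice n (i + d)) (Slice n i) ℝ
  | 0 => show Matrix (Slice n (i + 0)) (Slice n i) ℝ from (1 : Matrix (Slice n i) (Slice n i) ℝ)
  | d + 1 => upOp n (i + d) * upPathAux n i d

/-- The iterated up operator `P↑_{n,i,k} = P↑_{n,k-1} ⋯ P↑_{n,i}`. -/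
noncomputable def upPath (n i k : ℕ) : Matrix (Slice n k) (Slice n i) ℝ :=
  if h : i ≤ k then
    cast (by rw [Nat.add_sub_cancel' h]) (upPathAux n i (k - i))
  else 0

/-- `P∨_{n,k} = P↑_{n,k-1} P↓_{n,k}`. -/
noncomputable def upDown (n k : ℕ) : Matrix (Slice n k) (Slice n k) ℝ :=
  if h : 1 ≤ k then
    cast (by rw [Nat.sub_add_cancel h]) (upOp n (k - 1) * downOp n k)
  else 0

/-- `P∧_{n,k} = P↓_{n,k+1} P↑_{n,k}`. -/
noncomputable def downUp (n k : ℕ) : Matrix (Slice n k) (Slice n k) ℝ :=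
  downOp n (k + 1) * upOp n k

/-- `S ∈ H_{n,k}`: `S ⊆ {1,…,n}`, `|S| ≤ k`, and the `j`-th smallest element
(1-indexed) is at least `2j`. -/
def IsH (n k : ℕ) (S : Finset ℕ) : Prop :=
  S ⊆ Finset.Icc 1 n ∧ S.card ≤ k ∧
    ∀ j, j < S.card → 2 * (j + 1) ≤ (S.sort (· ≤ ·)).getD j 0

lemma wcast_false {n : ℕ} (x : Fin (n + 1) → Bool) (h : ¬ x (Fin.last n) = true) :
    (Finset.univ.filter fun i : Fin n => x (Fin.castSucc i) = true).card
      = (Finset.univ.filter fun i : Fin (n + 1) => x i = true).card := by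
  rw [Finset.card_filter, Finset.card_filter, Fin.sum_univ_castSucc]
  simp [h]

lemma wcast_true {n : ℕ} (x : Fin (n + 1) → Bool) (h : x (Fin.last n) = true) :
    (Finset.univ.filter fun i : Fin n => x (Fin.castSucc i) = true).card + 1
      = (Finset.univ.filter fun i : Fin (n + 1) => x i = true).card := by
  rw [Finset.card_filter, Finset.card_filter, Fin.sum_univ_castSucc]
  simp [h]

/-- Forgetting the last coordinate of `x` when it equals `0`. -/
def dropLast {n m : ℕ} (x : Slice (n + 1) m) (h : ¬ x.1 (Fin.last n) = true) : Slice n m :=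
  ⟨fun i => x.1 (Fin.castSucc i), by
    show (Finset.univ.filter fun i : Fin n => x.1 (Fin.castSucc i) = true).card = m
    rw [wcast_false x.1 h]; exact x.2⟩

/-- Forgetting the last coordinate of `x` when it equals `1`. -/
def dropLastT {n m : ℕ} (x : Slice (n + 1) m) (h : x.1 (Fin.last n) = true) : Slice n (m - 1) :=
  ⟨fun i => x.1 (Fin.castSucc i), by
    show (Finset.univ.filter fun i : Fin n => x.1 (Fin.castSucc i) = true).card = m - 1
    have h1 := wcast_true x.1 h
    have h2 := x.2
    omega⟩

/-- The vector `χ_{n,S}` on the slice `C([n],|S|)`, defined recursively. -/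
noncomputable def chi : (n : ℕ) → (S : Finset ℕ) → Slice n S.card → ℝ
  | 0, _ => fun _ => 1
  | n + 1, S =>
    if hS : n + 1 ∈ S then
      fun x =>
        if hx : x.1 (Fin.last n) = true then
          chi n (S.erase (n + 1)) ⟨(dropLastT x hx).1, by
            show (Finset.univ.filter fun i : Fin n => x.1 (Fin.castSucc i) = true).card
              = (S.erase (n + 1)).card
            rw [Finset.card_erase_of_mem hS]
            exact (dropLastT x hx).2⟩
        else
          -(∑ y : Slice n (S.erase (n + 1)).card,
              (if ∀ i, y.1 i = true → (dropLast x hx).1 i = true then (1 : ℝ) else 0) *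
                chi n (S.erase (n + 1)) y) / ((n : ℝ) + 1 - 2 * S.card + 1)
    else
      fun x =>
        if hx : x.1 (Fin.last n) = true then 0
        else chi n S (dropLast x hx)

/-- The basis vector `P↑_{n,|S|,k} χ_{n,S}` of `R^{C([n],k)}`. -/
noncomputable def basisVec (n k : ℕ) (S : Finset ℕ) : Slice n k → ℝ :=
  (upPath n S.card k).mulVec (chi n S)

/-- The Fourier coefficient `f̂(S)`, equal to `0` when `S ∉ H_{n,min{k,n-k}}`. -/
noncomputable def fourierSlice (n k : ℕ) (f : Slice n k → ℝ) (S : Finset ℕ) : ℝ :=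
  if IsH n (min k (n - k)) S then
    (∑ x, f x * basisVec n k S x) / Real.sqrt (∑ x, basisVec n k S x ^ 2)
  else 0

/-- The Hamming weight of `z ∈ {0,1}^t`. -/
def wt {t : ℕ} (z : Fin t → Bool) : ℕ :=
  (Finset.univ.filter fun i => z i = true).card

/-- The concatenation `x ∘ z ∈ {0,1}^n` of `x ∈ {0,1}^{n-t}` with `z ∈ {0,1}^t`
(with `z` occupying the last `t` coordinates). -/
def catFun (n t : ℕ) (x : Fin (n - t) → Bool) (z : Fin t → Bool) : Fin n → Bool :=
  fun i =>
    if h : (i : ℕ) < n - t then x ⟨i, h⟩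
    else if h2 : (i : ℕ) - (n - t) < t then z ⟨(i : ℕ) - (n - t), h2⟩
    else false

/-- The restriction `f_z : C([n-t], k-|z|) → ℝ`, `f_z(x) = f(x ∘ z)`; it is
(the everywhere-zero function on) the empty function when `|z| > k`. -/
noncomputable def restrict (n k t : ℕ) (f : Slice n k → ℝ) (z : Fin t → Bool) :
    Slice (n - t) (k - wt z) → ℝ :=
  fun x =>
    if h : (Finset.univ.filter fun i => catFun n t x.1 z i = true).card = k then
      f ⟨catFun n t x.1 z, h⟩
    else 0

/-- The Fourier coefficient `f̂_z(S)` of the restriction `f_z`. -/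
noncomputable def fourierSliceRestrict (n k t : ℕ) (f : Slice n k → ℝ) (z : Fin t → Bool)
    (S : Finset ℕ) : ℝ :=
  fourierSlice (n - t) (k - wt z) (restrict n k t f z) S

/-- The adjacency matrix `A_{n,k}` of the Johnson graph. -/
noncomputable def johnsonAdj (n k : ℕ) : Matrix (Slice n k) (Slice n k) ℝ :=
  Matrix.of fun x y =>
    if (Finset.univ.filter fun i => x.1 i ≠ y.1 i).card = 2 then (1 : ℝ) else 0

/-! ### Operators on the cube -/

/-- Splitting a sum over the cube `{0,1}^(n+1)` according to the last coordinate. -/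
lemma sum_cube_succ {n : ℕ} (h : (Fin (n + 1) → Bool) → ℝ) :
    ∑ x, h x = ∑ z : Fin n → Bool, h (Fin.snoc z false)
      + ∑ z : Fin n → Bool, h (Fin.snoc z true) := by
  have e := (Fin.snocEquiv (fun _ : Fin (n + 1) => Bool)).sum_comp h
  rw [← e, Fintype.sum_prod_type, Fintype.sum_bool, add_comm]
  rfl

lemma wt_snoc_false {n : ℕ} (z : Fin n → Bool) :
    wt (Fin.snoc z false : Fin (n + 1) → Bool) = wt z := by
  unfold wt
  rw [← wcast_false _ (by simp)]
  simp

lemma wt_snoc_true {n : ℕ} (z : Fin n → Bool) :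
    wt (Fin.snoc z true : Fin (n + 1) → Bool) = wt z + 1 := by
  unfold wt
  rw [← wcast_true _ (by simp)]
  simp

/-- `y` is obtained from `x` by changing a single `1` into a `0`. -/
def Covers {n : ℕ} (x y : Fin n → Bool) : Prop :=
  wt x = wt y + 1 ∧ ∀ i, y i = true → x i = true

lemma eq_of_wt_eq {n : ℕ} {x y : Fin n → Bool} (h : wt x = wt y)
    (hle : ∀ i, y i = true → x i = true) : y = x := by
  have hs : (Finset.univ.filter fun i => y i = true) = Finset.univ.filter fun i => x i = true :=
    Finset.eq_of_subset_of_card_le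
      (fun i hi => by simpa using hle i (by simpa using hi)) (le_of_eq h)
  funext i
  have := Finset.ext_iff.1 hs i
  simp only [Finset.mem_filter, Finset.mem_univ, true_and] at this
  exact Bool.eq_iff_iff.2 this

lemma covers_ff {n : ℕ} (x y : Fin n → Bool) :
    Covers (Fin.snoc x false : Fin (n + 1) → Bool) (Fin.snoc y false) ↔ Covers x y := by
  simp [Covers, wt_snoc_false, Fin.forall_fin_succ']

lemma covers_ft {n : ℕ} (x y : Fin n → Bool) :
    ¬ Covers (Fin.snoc x false : Fin (n + 1) → Bool) (Fin.snoc y true) := by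
  simp [Covers, Fin.forall_fin_succ']

lemma covers_tf {n : ℕ} (x y : Fin n → Bool) :
    Covers (Fin.snoc x true : Fin (n + 1) → Bool) (Fin.snoc y false) ↔ y = x := by
  simp only [Covers, wt_snoc_false, wt_snoc_true, Fin.forall_fin_succ', Fin.snoc_castSucc,
    Fin.snoc_last]
  constructor
  · rintro ⟨h, h', -⟩
    exact eq_of_wt_eq (by omega) h'
  · rintro rfl
    simp

lemma covers_tt {n : ℕ} (x y : Fin n → Bool) :
    Covers (Fin.snoc x true : Fin (n + 1) → Bool) (Fin.snoc y true) ↔ Covers x y := by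
  simp [Covers, wt_snoc_true, Fin.forall_fin_succ']

/-- The up operator on functions on the whole cube `{0,1}^n`. -/
noncomputable def cubeUp {n : ℕ} (g : (Fin n → Bool) → ℝ) : (Fin n → Bool) → ℝ :=
  fun x => ∑ y, if Covers x y then g y else 0

/-- The down operator on functions on the whole cube, the adjoint of `cubeUp`. -/
noncomputable def cubeDown {n : ℕ} (g : (Fin n → Bool) → ℝ) : (Fin n → Bool) → ℝ :=
  fun x => ∑ y, if Covers y x then g y else 0

lemma cubeUp_snoc_false {n : ℕ} (g : (Fin (n + 1) → Bool) → ℝ) (z : Fin n → Bool) :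
    cubeUp g (Fin.snoc z false) = cubeUp (fun y => g (Fin.snoc y false)) z := by
  simp [cubeUp, sum_cube_succ, covers_ff, covers_ft]

lemma cubeUp_snoc_true {n : ℕ} (g : (Fin (n + 1) → Bool) → ℝ) (z : Fin n → Bool) :
    cubeUp g (Fin.snoc z true)
      = cubeUp (fun y => g (Fin.snoc y true)) z + g (Fin.snoc z false) := by
  simp [cubeUp, sum_cube_succ, covers_tf, covers_tt, add_comm]

lemma cubeDown_snoc_false {n : ℕ} (g : (Fin (n + 1) → Bool) → ℝ) (z : Fin n → Bool) :
    cubeDown g (Fin.snoc z false)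
      = cubeDown (fun y => g (Fin.snoc y false)) z + g (Fin.snoc z true) := by
  simp [cubeDown, sum_cube_succ, covers_ff, covers_tf]

lemma cubeDown_snoc_true {n : ℕ} (g : (Fin (n + 1) → Bool) → ℝ) (z : Fin n → Bool) :
    cubeDown g (Fin.snoc z true) = cubeDown (fun y => g (Fin.snoc y true)) z := by
  simp [cubeDown, sum_cube_succ, covers_ft, covers_tt]

lemma cubeUp_add {n : ℕ} (g h : (Fin n → Bool) → ℝ) (x : Fin n → Bool) :
    cubeUp (fun y => g y + h y) x = cubeUp g x + cubeUp h x := by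
  simp only [cubeUp, ← Finset.sum_add_distrib]
  exact Finset.sum_congr rfl fun y _ => by split_ifs <;> simp

lemma cubeUp_smul {n : ℕ} (c : ℝ) (g : (Fin n → Bool) → ℝ) (x : Fin n → Bool) :
    cubeUp (fun y => c * g y) x = c * cubeUp g x := by
  simp only [cubeUp, Finset.mul_sum, mul_ite, mul_zero]

lemma cubeDown_add {n : ℕ} (g h : (Fin n → Bool) → ℝ) (x : Fin n → Bool) :
    cubeDown (fun y => g y + h y) x = cubeDown g x + cubeDown h x := by
  simp only [cubeDown, ← Finset.sum_add_distrib]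
  exact Finset.sum_congr rfl fun y _ => by split_ifs <;> simp

lemma cubeDown_smul {n : ℕ} (c : ℝ) (g : (Fin n → Bool) → ℝ) (x : Fin n → Bool) :
    cubeDown (fun y => c * g y) x = c * cubeDown g x := by
  simp only [cubeDown, Finset.mul_sum, mul_ite, mul_zero]

lemma sum_cubeUp_mul {n : ℕ} (g h : (Fin n → Bool) → ℝ) :
    ∑ x, cubeUp g x * h x = ∑ x, g x * cubeDown h x := by
  simp only [cubeUp, cubeDown, Finset.mul_sum, Finset.sum_mul]
  rw [Finset.sum_comm]
  exact Finset.sum_congr rfl fun y _ => Finset.sum_congr rfl fun x _ => by split_ifs <;> simp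

/-- The commutation relation `D U - U D = n - 2|x|`. -/
lemma cubeDown_cubeUp {n : ℕ} (g : (Fin n → Bool) → ℝ) (x : Fin n → Bool) :
    cubeDown (cubeUp g) x = cubeUp (cubeDown g) x + ((n : ℝ) - 2 * wt x) * g x := by
  induction n with
  | zero =>
    have h : ∀ x y : Fin 0 → Bool, ¬ Covers x y := fun x y => by simp [Covers, wt]
    simp [cubeUp, cubeDown, h, wt]
  | succ n ih =>
    induction x using Fin.snocCases with
    | snoc z a =>
    cases a
    · rw [cubeDown_snoc_false, cubeUp_snoc_false, cubeUp_snoc_true]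
      simp only [cubeUp_snoc_false, cubeDown_snoc_false, cubeUp_add, ih, wt_snoc_false]
      push_cast
      ring
    · rw [cubeDown_snoc_true, cubeUp_snoc_true]
      simp only [cubeUp_snoc_true, cubeDown_snoc_true, cubeDown_snoc_false, cubeDown_add, ih,
        wt_snoc_true]
      push_cast
      ring

/-! ### From slices to the cube -/

/-- Extension by zero of a function on a slice to the whole cube. -/
noncomputable def ext0 {n k : ℕ} (v : Slice n k → ℝ) : (Fin n → Bool) → ℝ :=
  fun x => if h : wt x = k then v ⟨x, h⟩ else 0

/-- The extension by zero of `χ_{n,S}`. -/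
noncomputable def cubeChi (n : ℕ) (S : Finset ℕ) : (Fin n → Bool) → ℝ := ext0 (chi n S)

/-- A sum over a slice is the sum over the cube of any function that agrees on the slice and
vanishes outside. -/
lemma sum_slice {n k : ℕ} (F : Slice n k → ℝ) (G : (Fin n → Bool) → ℝ)
    (h1 : ∀ x : Slice n k, F x = G x.1) (h2 : ∀ x, wt x ≠ k → G x = 0) :
    ∑ x, F x = ∑ x, G x := by
  rw [Finset.sum_congr rfl fun x _ => h1 x]
  rw [← Finset.sum_subtype (Finset.univ.filter fun x : Fin n → Bool => wt x = k)
    (p := fun x => (Finset.univ.filter fun i => x i = true).card = k)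
    (fun x => by
      rw [Finset.mem_filter]
      exact ⟨fun h => h.2, fun h => ⟨Finset.mem_univ _, h⟩⟩) G]
  exact Finset.sum_subset (Finset.subset_univ _) fun x _ hx => h2 x (by simpa using hx)

lemma ext0_coe {n k : ℕ} (v : Slice n k → ℝ) (x : Slice n k) : ext0 v x.1 = v x := by
  unfold ext0
  rw [dif_pos (show wt x.1 = k from x.2)]

lemma ext0_of_ne {n k : ℕ} (v : Slice n k → ℝ) {x : Fin n → Bool} (h : wt x ≠ k) :
    ext0 v x = 0 := dif_neg h

lemma sum_mul_slice {n k : ℕ} (u v : Slice n k → ℝ) :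
    ∑ x, u x * v x = ∑ x, ext0 u x * ext0 v x :=
  sum_slice _ _ (fun x => by rw [ext0_coe, ext0_coe])
    (fun x hx => by rw [ext0_of_ne u hx, zero_mul])

/-- At a point of weight `k + 1`, the sum over the slice of weight `k` that defines `P↑_{n,k}` is
`cubeUp` of the extension. -/
lemma sum_le_eq_cubeUp {n k : ℕ} (v : Slice n k → ℝ) (x : Fin n → Bool) (hx : wt x = k + 1) :
    ∑ y : Slice n k, (if ∀ i, y.1 i = true → x i = true then (1 : ℝ) else 0) * v y
      = cubeUp (ext0 v) x := by
  refine sum_slice _ _ (fun y => ?_) (fun y hy => ?_)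
  · rw [ext0_coe]
    have hy : wt y.1 = k := y.2
    simp [Covers, hx, hy]
  · rw [ext0_of_ne v hy, ite_self]

lemma ext0_upOp {n k : ℕ} (v : Slice n k → ℝ) :
    ext0 ((upOp n k).mulVec v) = cubeUp (ext0 v) := by
  funext x
  by_cases hx : wt x = k + 1
  · rw [← sum_le_eq_cubeUp v x hx, ext0, dif_pos hx]
    rfl
  · rw [ext0_of_ne _ hx, cubeUp]
    refine (Finset.sum_eq_zero fun y _ => ?_).symm
    split_ifs with h
    · refine ext0_of_ne v fun hy => hx ?_
      rw [h.1, hy]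
    · rfl

lemma ext0_upPathAux {n i : ℕ} (d : ℕ) (v : Slice n i → ℝ) :
    ext0 ((upPathAux n i d).mulVec v) = cubeUp^[d] (ext0 v) := by
  induction d with
  | zero =>
    show ext0 ((1 : Matrix (Slice n i) (Slice n i) ℝ).mulVec v) = ext0 v
    rw [Matrix.one_mulVec]
  | succ d ih =>
    rw [Function.iterate_succ_apply', ← ih, ← ext0_upOp, Matrix.mulVec_mulVec]
    rfl

lemma ext0_basisVec {n k : ℕ} (S : Finset ℕ) (h : S.card ≤ k) :
    ext0 (basisVec n k S) = cubeUp^[k - S.card] (cubeChi n S) := by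
  obtain ⟨d, rfl⟩ := Nat.exists_eq_add_of_le h
  have e : upPath n S.card (S.card + d) = upPathAux n S.card d := by
    unfold upPath
    rw [dif_pos h]
    have key : ∀ (d' : ℕ) (hd : d' = d)
        (p : Matrix (Slice n (S.card + d')) (Slice n S.card) ℝ
          = Matrix (Slice n (S.card + d)) (Slice n S.card) ℝ),
        cast p (upPathAux n S.card d') = upPathAux n S.card d := by
      rintro d' rfl p
      rfl
    exact key _ (by omega) _
  rw [basisVec, e, ext0_upPathAux, Nat.add_sub_cancel_left]
  rfl

lemma fourierSlice_eq {n k : ℕ} (f : Slice n k → ℝ) (S : Finset ℕ)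
    (h : IsH n (min k (n - k)) S) :
    fourierSlice n k f S = (∑ x, ext0 f x * (cubeUp^[k - S.card] (cubeChi n S)) x)
      / √(∑ x, (cubeUp^[k - S.card] (cubeChi n S)) x ^ 2) := by
  have hk : S.card ≤ k := h.2.1.trans (min_le_left _ _)
  rw [fourierSlice, if_pos h, ← ext0_basisVec S hk, sum_mul_slice]
  simp only [pow_two]
  rw [sum_mul_slice]

/-! ### The vectors `χ` -/

lemma cubeChi_of_notMem {n : ℕ} {S : Finset ℕ} (h : n + 1 ∉ S) (z : Fin n → Bool) :
    cubeChi (n + 1) S (Fin.snoc z false) = cubeChi n S z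
      ∧ cubeChi (n + 1) S (Fin.snoc z true) = 0 := by
  constructor
  · unfold cubeChi ext0
    simp only [wt_snoc_false]
    split_ifs with hz
    · simp [chi, h, dropLast]
    · rfl
  · unfold cubeChi ext0
    split_ifs with hz
    · simp [chi, h]
    · rfl

lemma chi_congr {n : ℕ} {S T : Finset ℕ} (h : S = T) (x : Slice n S.card) (y : Slice n T.card)
    (hxy : x.1 = y.1) : chi n S x = chi n T y := by
  subst h
  rw [Subtype.ext hxy]

/-- The extension of `χ_{n+1,S∪{n+1}}` is the pair `(-U X / (n - 2|S|), X)`, where `X` is the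
extension of `χ_{n,S}`. -/
lemma cubeChi_insert {n : ℕ} {S : Finset ℕ} (h : n + 1 ∉ S) (z : Fin n → Bool) :
    cubeChi (n + 1) (insert (n + 1) S) (Fin.snoc z false)
        = -(1 / ((n : ℝ) - 2 * S.card)) * cubeUp (cubeChi n S) z
      ∧ cubeChi (n + 1) (insert (n + 1) S) (Fin.snoc z true) = cubeChi n S z := by
  have hc : (insert (n + 1) S).card = S.card + 1 := Finset.card_insert_of_notMem h
  have he : (insert (n + 1) S).erase (n + 1) = S := Finset.erase_insert h
  have hm : n + 1 ∈ insert (n + 1) S := Finset.mem_insert_self _ _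
  constructor
  · by_cases hz : wt z = S.card + 1
    · have hz' : wt (Fin.snoc z false : Fin (n + 1) → Bool) = (insert (n + 1) S).card := by
        rw [wt_snoc_false, hz, hc]
      rw [cubeChi, ext0, dif_pos hz']
      simp only [chi]
      rw [dif_pos hm, dif_neg (by simp)]
      rw [sum_le_eq_cubeUp _ _ (by
        rw [he, ← hz]; simp [wt, dropLast])]
      have e1 : (dropLast (⟨Fin.snoc z false, hz'⟩ : Slice (n + 1) (insert (n + 1) S).card)
          (by simp)).1 = z := by
        funext i; simp [dropLast]
      rw [e1]
      have e2 : cubeUp (ext0 (chi n ((insert (n + 1) S).erase (n + 1)))) z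
          = cubeUp (cubeChi n S) z := by
        unfold cubeChi; rw [he]
      rw [e2, hc]
      have e3 : (n : ℝ) + 1 - 2 * ((S.card + 1 : ℕ) : ℝ) + 1 = n - 2 * S.card := by
        push_cast; ring
      rw [e3]
      ring
    · rw [cubeChi, ext0_of_ne _ (by rwa [wt_snoc_false, hc])]
      have : cubeUp (cubeChi n S) z = 0 := by
        rw [cubeChi, ← ext0_upOp, ext0_of_ne _ hz]
      rw [this, mul_zero]
  · by_cases hz : wt z = S.card
    · have hz' : wt (Fin.snoc z true : Fin (n + 1) → Bool) = (insert (n + 1) S).card := by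
        rw [wt_snoc_true, hz, hc]
      rw [cubeChi, cubeChi, ext0, ext0, dif_pos hz', dif_pos hz]
      simp only [chi]
      rw [dif_pos hm, dif_pos (by simp)]
      refine chi_congr he _ _ ?_
      funext i; simp [dropLastT]
    · rw [cubeChi, cubeChi, ext0_of_ne _ (by rwa [wt_snoc_true, hc, Ne, Nat.add_right_cancel_iff]),
        ext0_of_ne _ hz]

/-- The condition `s_j ≥ 2j` on all elements of `S = {s₁ < s₂ < ⋯}`. -/
def Ballot (S : Finset ℕ) : Prop :=
  ∀ j, j < S.card → 2 * (j + 1) ≤ (S.sort (· ≤ ·)).getD j 0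

lemma sort_insert_max {S : Finset ℕ} {m : ℕ} (h : ∀ a ∈ S, a < m) :
    (insert m S).sort (· ≤ ·) = S.sort (· ≤ ·) ++ [m] := by
  have hm : m ∉ S := fun hm => lt_irrefl _ (h m hm)
  refine List.Perm.eq_of_pairwise' (r := (· ≤ ·)) (Finset.pairwise_sort _ _) ?_ ?_
  · rw [List.pairwise_append]
    refine ⟨Finset.pairwise_sort _ _, by simp, ?_⟩
    intro a ha b hb
    rw [Finset.mem_sort] at ha
    rw [List.mem_singleton.1 hb]
    exact (h a ha).le
  · refine (List.perm_ext_iff_of_nodup (Finset.sort_nodup _ _) ?_).2 fun a => ?_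
    · rw [List.nodup_append]
      refine ⟨Finset.sort_nodup _ _, by simp, ?_⟩
      intro a ha b hb
      rw [Finset.mem_sort] at ha
      rw [List.mem_singleton.1 hb]
      exact (h a ha).ne
    · simp [or_comm]

lemma ballot_insert_max {S : Finset ℕ} {m : ℕ} (h : ∀ a ∈ S, a < m) :
    Ballot (insert m S) ↔ Ballot S ∧ 2 * (S.card + 1) ≤ m := by
  have hm : m ∉ S := fun hm => lt_irrefl _ (h m hm)
  have hl : (S.sort (· ≤ ·)).length = S.card := Finset.length_sort _
  unfold Ballot
  rw [Finset.card_insert_of_notMem hm, sort_insert_max h]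
  constructor
  · intro H
    refine ⟨fun j hj => ?_, ?_⟩
    · have := H j (by omega)
      rwa [List.getD_append _ _ _ _ (by omega)] at this
    · have := H S.card (by omega)
      rwa [List.getD_append_right _ _ _ _ (by omega), hl, Nat.sub_self] at this
  · rintro ⟨H1, H2⟩ j hj
    rcases Nat.lt_succ_iff_lt_or_eq.1 hj with hj | rfl
    · rw [List.getD_append _ _ _ _ (by omega)]
      exact H1 j hj
    · rw [List.getD_append_right _ _ _ _ (by omega), hl, Nat.sub_self]
      exact H2

/-- The vectors `χ_{n,S}` are harmonic: the down operator annihilates them. -/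
lemma cubeDown_cubeChi (n : ℕ) (S : Finset ℕ) (hS : S ⊆ Finset.Icc 1 n) (hb : Ballot S) :
    ∀ x, cubeDown (cubeChi n S) x = 0 := by
  induction n generalizing S with
  | zero =>
    intro x
    have h : ∀ x y : Fin 0 → Bool, ¬ Covers x y := fun x y => by simp [Covers, wt]
    simp [cubeDown, h]
  | succ n ih =>
    intro x
    by_cases hm : n + 1 ∈ S
    · obtain ⟨T, hT, rfl⟩ : ∃ T, n + 1 ∉ T ∧ insert (n + 1) T = S :=
        ⟨S.erase (n + 1), Finset.notMem_erase _ _, Finset.insert_erase hm⟩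
      have hsub : T ⊆ Finset.Icc 1 n := by
        intro a ha
        have h1 := Finset.mem_Icc.1 (hS (Finset.mem_insert_of_mem ha))
        have h2 : a ≠ n + 1 := fun e => hT (e ▸ ha)
        exact Finset.mem_Icc.2 ⟨h1.1, by omega⟩
      have hlt : ∀ a ∈ T, a < n + 1 := fun a ha => by
        have := (Finset.mem_Icc.1 (hsub ha)).2
        omega
      obtain ⟨hbT, hcard⟩ := (ballot_insert_max hlt).1 hb
      have IH := ih T hsub hbT
      have hne : (n : ℝ) - 2 * T.card ≠ 0 := by
        have : ((2 * (T.card + 1) : ℕ) : ℝ) ≤ ((n + 1 : ℕ) : ℝ) := by exact_mod_cast hcard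
        push_cast at this
        intro h0
        linarith
      induction x using Fin.snocCases with
      | snoc z a =>
      cases a
      · rw [cubeDown_snoc_false]
        simp only [(cubeChi_insert hT _).1, (cubeChi_insert hT _).2]
        rw [cubeDown_smul, cubeDown_cubeUp]
        have h0 : cubeUp (cubeDown (cubeChi n T)) z = 0 := by
          simp [cubeUp, IH]
        rw [h0]
        by_cases hz : wt z = T.card
        · rw [hz]
          field_simp
          ring
        · rw [cubeChi, ext0_of_ne _ hz]
          ring
      · rw [cubeDown_snoc_true]
        simp only [(cubeChi_insert hT _).2]
        exact IH z
    · have hsub : S ⊆ Finset.Icc 1 n := by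
        intro a ha
        have h1 := Finset.mem_Icc.1 (hS ha)
        have h2 : a ≠ n + 1 := fun e => hm (e ▸ ha)
        exact Finset.mem_Icc.2 ⟨h1.1, by omega⟩
      induction x using Fin.snocCases with
      | snoc z a =>
      cases a
      · rw [cubeDown_snoc_false]
        simp only [(cubeChi_of_notMem hm _).1, (cubeChi_of_notMem hm _).2]
        rw [add_zero]
        exact ih S hsub hb z
      · rw [cubeDown_snoc_true]
        simp only [(cubeChi_of_notMem hm _).2]
        simp [cubeDown]

/-! ### Iterated up operators -/

lemma iterate_cubeUp_of_ne {n : ℕ} (S : Finset ℕ) (m : ℕ) {x : Fin n → Bool}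
    (hx : wt x ≠ S.card + m) : cubeUp^[m] (cubeChi n S) x = 0 := by
  rw [cubeChi, ← ext0_upPathAux, ext0_of_ne _ hx]

lemma cubeDown_iterate {n : ℕ} {S : Finset ℕ} (hS : S ⊆ Finset.Icc 1 n) (hb : Ballot S) (m : ℕ) :
    ∀ x, cubeDown (cubeUp^[m + 1] (cubeChi n S)) x
      = ((m : ℝ) + 1) * ((n : ℝ) - 2 * S.card - m) * cubeUp^[m] (cubeChi n S) x := by
  -- The weight in the commutation relation may be replaced by `|S| + m`, since `U^m X` lives there.
  have hw : ∀ m x, ((n : ℝ) - 2 * wt x) * cubeUp^[m] (cubeChi n S) x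
      = ((n : ℝ) - 2 * (S.card + m)) * cubeUp^[m] (cubeChi n S) x := by
    intro m x
    by_cases hx : wt x = S.card + m
    · rw [hx]; push_cast; ring
    · rw [iterate_cubeUp_of_ne S m hx]; ring
  induction m with
  | zero =>
    intro x
    rw [Function.iterate_succ_apply', cubeDown_cubeUp, hw]
    have h0 : cubeUp (cubeDown (cubeUp^[0] (cubeChi n S))) x = 0 := by
      simp [cubeUp, cubeDown_cubeChi n S hS hb]
    rw [h0]
    push_cast
    ring
  | succ m ih =>
    intro x
    rw [Function.iterate_succ_apply', cubeDown_cubeUp, hw]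
    have h0 : cubeUp (cubeDown (cubeUp^[m + 1] (cubeChi n S))) x
        = ((m : ℝ) + 1) * ((n : ℝ) - 2 * S.card - m) * cubeUp^[m + 1] (cubeChi n S) x := by
      rw [funext ih, cubeUp_smul, Function.iterate_succ_apply']
    rw [h0]
    push_cast
    ring

/-- The norm relation `‖U^(m+1) X‖² = (m+1)(n-2|S|-m) ‖U^m X‖²`. -/
lemma sum_cubeUp_sq {n : ℕ} {S : Finset ℕ} (hS : S ⊆ Finset.Icc 1 n) (hb : Ballot S) (m : ℕ) :
    ∑ x, cubeUp^[m + 1] (cubeChi n S) x ^ 2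
      = ((m : ℝ) + 1) * ((n : ℝ) - 2 * S.card - m) * ∑ x, cubeUp^[m] (cubeChi n S) x ^ 2 := by
  calc ∑ x, cubeUp^[m + 1] (cubeChi n S) x ^ 2
      = ∑ x, cubeUp (cubeUp^[m] (cubeChi n S)) x * cubeUp^[m + 1] (cubeChi n S) x := by
        refine Finset.sum_congr rfl fun x _ => ?_
        rw [← Function.iterate_succ_apply' cubeUp m, pow_two]
    _ = _ := by
        rw [sum_cubeUp_mul, Finset.mul_sum]
        refine Finset.sum_congr rfl fun x _ => ?_
        rw [cubeDown_iterate hS hb]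
        ring

/-- The two components of `U^m` of the extension of `χ_{n+1,S∪{n+1}}`. -/
lemma iterate_cubeUp_insert {n : ℕ} {S : Finset ℕ} (h : n + 1 ∉ S) (m : ℕ) :
    ∀ z : Fin n → Bool,
      cubeUp^[m] (cubeChi (n + 1) (insert (n + 1) S)) (Fin.snoc z false)
        = -(1 / ((n : ℝ) - 2 * S.card)) * cubeUp^[m + 1] (cubeChi n S) z
      ∧ cubeUp^[m] (cubeChi (n + 1) (insert (n + 1) S)) (Fin.snoc z true)
        = (1 - m / ((n : ℝ) - 2 * S.card)) * cubeUp^[m] (cubeChi n S) z := by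
  induction m with
  | zero =>
    intro z
    simpa using cubeChi_insert h z
  | succ m ih =>
    intro z
    rw [Function.iterate_succ_apply']
    constructor
    · rw [cubeUp_snoc_false]
      simp only [(ih _).1]
      rw [cubeUp_smul, Function.iterate_succ_apply' cubeUp (m + 1)]
    · rw [cubeUp_snoc_true]
      simp only [(ih _).1, (ih _).2]
      rw [cubeUp_smul, Function.iterate_succ_apply' cubeUp m]
      push_cast
      ring

/-! ### Restrictions -/

lemma catFun_one {n : ℕ} (x : Fin n → Bool) (b : Bool) :
    catFun (n + 1) 1 x (fun _ => b) = (Fin.snoc x b : Fin (n + 1) → Bool) := by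
  funext i
  induction i using Fin.lastCases with
  | last => simp [catFun]
  | cast i => simp [catFun]

lemma ext0_restrict {n k : ℕ} (f : Slice (n + 1) k → ℝ) (b : Bool) (hk : 1 ≤ k)
    (x : Fin n → Bool) :
    ext0 (n := n) (restrict (n + 1) k 1 f (fun _ => b)) x
      = ext0 f (Fin.snoc x b : Fin (n + 1) → Bool) := by
  have hw : wt (Fin.snoc x b : Fin (n + 1) → Bool) = k
      ↔ wt x = k - wt (fun _ : Fin 1 => b) := by
    cases b
    · rw [wt_snoc_false]; simp [wt]
    · rw [wt_snoc_true]; simp [wt]; omega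
  by_cases h : wt (Fin.snoc x b : Fin (n + 1) → Bool) = k
  · rw [ext0, ext0, dif_pos h, dif_pos (hw.1 h), restrict]
    have h' : wt (catFun (n + 1) 1 x (fun _ => b)) = k := by rw [catFun_one, h]
    rw [dif_pos (show (Finset.univ.filter fun i => catFun (n + 1) 1 x (fun _ => b) i = true).card
      = k from h')]
    exact congrArg f (Subtype.ext (catFun_one x b))
  · rw [ext0_of_ne _ h, ext0_of_ne _ (fun e => h (hw.2 e))]

lemma fourierSliceRestrict_eq {n k : ℕ} (f : Slice (n + 1) k → ℝ) (b : Bool) (hk : 1 ≤ k)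
    (S : Finset ℕ) (k' : ℕ) (hk' : k - wt (fun _ : Fin 1 => b) = k')
    (h : IsH n (min k' (n - k')) S) :
    fourierSliceRestrict (n + 1) k 1 f (fun _ => b) S
      = (∑ x : Fin n → Bool, ext0 f (Fin.snoc x b : Fin (n + 1) → Bool)
            * (cubeUp^[k' - S.card] (cubeChi n S)) x)
        / √(∑ x, (cubeUp^[k' - S.card] (cubeChi n S)) x ^ 2) := by
  subst hk'
  have e := fourierSlice_eq (n := n) (restrict (n + 1) k 1 f (fun _ => b)) S h
  simp only [ext0_restrict f b hk] at e
  exact e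

/-- For `S ∈ H_{n-1,min{k,n-k}}` with `|S| < min{k,n-k}`:
`f̂(S ∪ {n}) = (1/√(n-2|S|))(-√(k-|S|)·f̂₀(S) + √(n-k-|S|)·f̂₁(S))`. -/
theorem stmt13 (n k : ℕ) (hn : 1 ≤ n) (hk : k ≤ n) (f : Slice n k → ℝ)
    (S : Finset ℕ) (hS : IsH (n - 1) (min k (n - k)) S)
    (hcard : S.card < min k (n - k)) :
    fourierSlice n k f (insert n S)
      = (1 / Real.sqrt ((n : ℝ) - 2 * S.card)) *
          (-(Real.sqrt ((k : ℝ) - S.card) *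
                fourierSliceRestrict n k 1 f (fun _ => false) S)
            + Real.sqrt ((n : ℝ) - k - S.card) *
                fourierSliceRestrict n k 1 f (fun _ => true) S) := by
  obtain ⟨n, rfl⟩ : ∃ n', n = n' + 1 := ⟨n - 1, by omega⟩
  rw [Nat.add_sub_cancel] at hS
  obtain ⟨hsub, -, hb⟩ := hS
  change Ballot S at hb
  have hlt : ∀ a ∈ S, a < n + 1 := fun a ha => by
    have := (Finset.mem_Icc.1 (hsub ha)).2
    omega
  have hmem : n + 1 ∉ S := fun h => lt_irrefl _ (hlt _ h)
  have hc : (insert (n + 1) S).card = S.card + 1 := Finset.card_insert_of_notMem hmem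
  obtain ⟨hc1, hc2⟩ := lt_min_iff.1 hcard
  obtain ⟨m, rfl⟩ : ∃ m, k = S.card + m + 1 := ⟨k - S.card - 1, by omega⟩
  obtain ⟨r, hr⟩ : ∃ r, n = 2 * S.card + m + r + 1 := ⟨n - 2 * S.card - m - 1, by omega⟩
  have hH : IsH (n + 1) (min (S.card + m + 1) (n + 1 - (S.card + m + 1))) (insert (n + 1) S) := by
    refine ⟨?_, by rw [hc]; omega, (ballot_insert_max hlt).2 ⟨hb, by omega⟩⟩
    refine Finset.insert_subset (Finset.mem_Icc.2 ⟨by omega, le_rfl⟩) (hsub.trans ?_)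
    exact Finset.Icc_subset_Icc le_rfl (by omega)
  rw [fourierSlice_eq f _ hH,
    fourierSliceRestrict_eq f false (by omega) S (S.card + m + 1) (by simp [wt])
      ⟨hsub, by omega, hb⟩,
    fourierSliceRestrict_eq f true (by omega) S (S.card + m) (by simp [wt])
      ⟨hsub, by omega, hb⟩]
  rw [hc, show S.card + m + 1 - (S.card + 1) = m by omega,
    show S.card + m + 1 - S.card = m + 1 by omega, show S.card + m - S.card = m by omega]
  rw [sum_cube_succ, sum_cube_succ]
  simp only [(iterate_cubeUp_insert hmem m _).1, (iterate_cubeUp_insert hmem m _).2, mul_pow,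
    mul_left_comm (ext0 f _), ← Finset.mul_sum]
  rw [sum_cubeUp_sq hsub hb m]
  have hA : 0 ≤ ∑ x, cubeUp^[m] (cubeChi n S) x ^ 2 := Finset.sum_nonneg fun _ _ => sq_nonneg _
  generalize ∑ x, cubeUp^[m] (cubeChi n S) x ^ 2 = A at hA ⊢
  generalize ∑ x, ext0 f (Fin.snoc x false) * cubeUp^[m + 1] (cubeChi n S) x = p
  generalize ∑ x, ext0 f (Fin.snoc x true) * cubeUp^[m] (cubeChi n S) x = q
  have hn' : (n : ℝ) = 2 * S.card + m + r + 1 := by rw [hr]; push_cast; ring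
  push_cast
  rw [hn', show (2 * (S.card : ℝ) + m + r + 1) - 2 * S.card = m + r + 1 by ring,
    show (m : ℝ) + r + 1 - m = r + 1 by ring,
    show 2 * (S.card : ℝ) + m + r + 1 + 1 - 2 * S.card = m + r + 2 by ring,
    show (S.card : ℝ) + m + 1 - S.card = m + 1 by ring,
    show 2 * (S.card : ℝ) + m + r + 1 + 1 - (S.card + m + 1) - S.card = r + 1 by ring]
  have hD : (0 : ℝ) < m + r + 1 := by positivity
  have hr1 : (0 : ℝ) < r + 1 := by positivity
  have hm1 : (0 : ℝ) < m + 1 := by positivity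
  have hN : (0 : ℝ) < m + r + 2 := by positivity
  rw [show (-(1 / ((m : ℝ) + r + 1))) ^ 2 * ((m + 1) * (r + 1) * A)
      + (1 - m / ((m : ℝ) + r + 1)) ^ 2 * A
      = (1 / (m + r + 1)) ^ 2 * ((r + 1) * ((m + r + 2) * A)) by field_simp; ring,
    Real.sqrt_mul (by positivity), Real.sqrt_sq (by positivity), Real.sqrt_mul hr1.le,
    Real.sqrt_mul hN.le, Real.sqrt_mul (by positivity), Real.sqrt_mul hm1.le]
  rcases hA.eq_or_lt with rfl | hA
  · simp
  have s1 := Real.sqrt_pos.2 hA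
  have s2 := Real.sqrt_pos.2 hr1
  have s3 := Real.sqrt_pos.2 hm1
  have s4 := Real.sqrt_pos.2 hN
  have e2 := Real.sq_sqrt hr1.le
  field_simp
  rw [e2]
  ring
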